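/- Let F : S → G(S) be a Markov chain on a measurable space S and let A, B ⊆ S be measurable. There exists a generalised Streett supermartingale for (F, A, B) if and only if F is positively (A,B)-recurrent from every initial state, i.e., E_{s₀}[step_{s₀}^{(A,B)}] < ∞ for all s₀ ∈ S. -/

import Mathlib

open MeasureTheory ProbabilityTheory Set
open scoped ENNReal NNReal

variable {S : Type*} [MeasurableSpace S]

/-- Prepend an initial state to a trace. -/
def prep (s₀ : S) (ω : ℕ → S) : ℕ → S := fun n => Nat.rec s₀ (fun k _ => ω k) n

/-- `stepCount A B s₀ ω` is the number of indices `i` with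
`0 ≤ i < min {j | s_j ∈ B}` and `s_i ∈ A`, where `s₀ s₁ s₂ ⋯` is the trace `ω`
prefixed with the initial state `s₀`. -/
noncomputable def stepCount (A B : Set S) (s₀ : S) (ω : ℕ → S) : ℕ∞ :=
  {i : ℕ | prep s₀ ω i ∈ A ∧ ∀ j ≤ i, prep s₀ ω j ∉ B}.encard

/-- The next-time operator: `(𝕏 g)(s) = ∫ g dF(s)`. -/
noncomputable def nextTime (F : Kernel S S) (g : S → ℝ≥0∞) : S → ℝ≥0∞ :=
  fun s => ∫⁻ y, g y ∂(F s)

/-- A generalised Streett supermartingale (GSSM) for `(F, A, B)`: a measurable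
`[0,∞)`-valued function `r` with `(𝕏 r)(x) ≤ r(x) − 1` on `A ∖ B` and
`(𝕏 r)(x) ≤ r(x)` outside `A ∪ B`. -/
def IsGSSM (F : Kernel S S) (A B : Set S) (r : S → ℝ≥0∞) : Prop :=
  Measurable r ∧ (∀ x, r x ≠ ⊤) ∧
    (∀ x ∈ A \ B, nextTime F r x + 1 ≤ r x) ∧
    (∀ x ∉ A ∪ B, nextTime F r x ≤ r x)

/-- Event that index `i` is counted. -/
def evt (A B : Set S) (i : ℕ) (s : S) : Set (ℕ → S) :=
  {ω | prep s ω i ∈ A ∧ ∀ j ≤ i, prep s ω j ∉ B}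

lemma measurable_prep_uncurry : Measurable (fun p : S × (ℕ → S) => prep p.1 p.2) := by
  refine measurable_pi_lambda _ fun n => ?_
  cases n with
  | zero => exact measurable_fst
  | succ k => exact (measurable_pi_apply k).comp measurable_snd

lemma measurable_prep (s : S) : Measurable (prep s) :=
  measurable_prep_uncurry.comp measurable_prodMk_left

lemma measurableSet_evt_uncurry {A B : Set S} (hA : MeasurableSet A) (hB : MeasurableSet B)
    (i : ℕ) : MeasurableSet {p : S × (ℕ → S) | p.2 ∈ evt A B i p.1} := by
  have h : ∀ n, Measurable (fun p : S × (ℕ → S) => prep p.1 p.2 n) := fun n =>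
    (measurable_pi_apply n).comp measurable_prep_uncurry
  have e : {p : S × (ℕ → S) | p.2 ∈ evt A B i p.1} =
      ((fun p : S × (ℕ → S) => prep p.1 p.2 i) ⁻¹' A) ∩
        ⋂ j, ⋂ (_ : j ≤ i), ((fun p : S × (ℕ → S) => prep p.1 p.2 j) ⁻¹' Bᶜ) := by
    ext p; simp [evt]
  rw [e]
  exact (h i hA).inter (MeasurableSet.iInter fun j => MeasurableSet.iInter fun _ => h j hB.compl)

lemma measurableSet_evt {A B : Set S} (hA : MeasurableSet A) (hB : MeasurableSet B)
    (i : ℕ) (s : S) : MeasurableSet (evt A B i s) :=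
  measurable_prodMk_left (x := s) (measurableSet_evt_uncurry hA hB i)

lemma measurable_evt (P : Kernel S (ℕ → S)) [IsMarkovKernel P]
    {A B : Set S} (hA : MeasurableSet A) (hB : MeasurableSet B) (i : ℕ) :
    Measurable (fun s => P s (evt A B i s)) :=
  Kernel.measurable_kernel_prodMk_left (measurableSet_evt_uncurry hA hB i)

lemma measurable_map_prep (P : Kernel S (ℕ → S)) [IsMarkovKernel P] :
    Measurable (fun s => (P s).map (prep s)) := by
  refine Measure.measurable_of_measurable_coe _ fun t ht => ?_
  have : (fun s => (P s).map (prep s) t) = fun s => P s (Prod.mk s ⁻¹'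
      ((fun p : S × (ℕ → S) => prep p.1 p.2) ⁻¹' t)) := by
    funext s
    rw [Measure.map_apply (measurable_prep s) ht]
    rfl
  rw [this]
  exact Kernel.measurable_kernel_prodMk_left (measurable_prep_uncurry ht)

lemma lintegral_stepCount (P : Kernel S (ℕ → S)) 
    {A B : Set S} (hA : MeasurableSet A) (hB : MeasurableSet B) (s : S) :
    ∫⁻ ω, (stepCount A B s ω : ℝ≥0∞) ∂(P s) = ∑' i, P s (evt A B i s) := by
  have : ∀ ω, (stepCount A B s ω : ℝ≥0∞) = ∑' i, (evt A B i s).indicator 1 ω := by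
    intro ω
    rw [stepCount, ← ENNReal.tsum_set_one, tsum_subtype _ (fun _ => (1 : ℝ≥0∞))]
    refine tsum_congr fun i => ?_
    by_cases h : ω ∈ evt A B i s
    · rw [indicator_of_mem h, indicator_of_mem]
      · rfl
      · exact h
    · rw [indicator_of_notMem h, indicator_of_notMem]
      exact h
  simp_rw [this]
  rw [lintegral_tsum fun i =>
    (measurable_one.indicator (measurableSet_evt hA hB i s)).aemeasurable]
  exact tsum_congr fun i => lintegral_indicator_one (measurableSet_evt hA hB i s)

lemma evt_zero_of_mem {A B : Set S} {s : S} (h : s ∈ A \ B) : evt A B 0 s = univ := by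
  ext ω
  simp [evt, prep, h.1, h.2]

lemma evt_zero_of_notMem {A B : Set S} {s : S} (h : s ∉ A \ B) : evt A B 0 s = ∅ := by
  ext ω
  simp only [evt, mem_setOf_eq, mem_empty_iff_false, iff_false]
  rintro ⟨h1, h2⟩
  exact h ⟨h1, h2 0 le_rfl⟩

lemma evt_of_mem_B {A B : Set S} {s : S} (h : s ∈ B) (i : ℕ) : evt A B i s = ∅ := by
  ext ω
  simp only [evt, mem_setOf_eq, mem_empty_iff_false, iff_false]
  rintro ⟨h1, h2⟩
  exact h2 0 (Nat.zero_le _) h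

lemma evt_succ {A B : Set S} {s : S} (h : s ∉ B) (i : ℕ) (s₁ : S) :
    prep s₁ ⁻¹' (evt A B (i + 1) s) = evt A B i s₁ := by
  ext ω
  simp only [evt, mem_setOf_eq, mem_preimage]
  refine and_congr Iff.rfl ⟨fun H j hj => H (j + 1) (by omega), fun H j hj => ?_⟩
  cases j with
  | zero => exact h
  | succ k => exact H k (by omega)

lemma measure_evt_succ (F : Kernel S S) 
    (P : Kernel S (ℕ → S)) [IsMarkovKernel P]
    (hP : ∀ s₀ : S, (P s₀ : Measure (ℕ → S)) = (F s₀).bind fun s₁ => (P s₁).map (prep s₁))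
    {A B : Set S} (hA : MeasurableSet A) (hB : MeasurableSet B) {s : S} (h : s ∉ B) (i : ℕ) :
    P s (evt A B (i + 1) s) = ∫⁻ y, P y (evt A B i y) ∂(F s) := by
  have hm := measurableSet_evt hA hB (i + 1) s
  conv_lhs => rw [hP s]
  rw [Measure.bind_apply hm (measurable_map_prep P).aemeasurable]
  refine lintegral_congr fun y => ?_
  rw [Measure.map_apply (measurable_prep y) hm, evt_succ h]

/-- There exists a generalised Streett supermartingale for `(F, A, B)` iff the
Markov chain is positively `(A,B)`-recurrent from every initial state. -/
theorem exists_GSSM_iff_positive_recurrent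
    (F : Kernel S S) [IsMarkovKernel F]
    (P : Kernel S (ℕ → S)) [IsMarkovKernel P]
    (hP : ∀ s₀ : S, (P s₀ : Measure (ℕ → S)) = (F s₀).bind fun s₁ => (P s₁).map (prep s₁))
    (A B : Set S) (hA : MeasurableSet A) (hB : MeasurableSet B) :
    (∃ r : S → ℝ≥0∞, IsGSSM F A B r) ↔
      (∀ s₀ : S, ∫⁻ ω, (stepCount A B s₀ ω : ℝ≥0∞) ∂(P s₀) < ⊤) := by
  constructor
  · rintro ⟨r, hr, hfin, h1, h2⟩ s₀
    rw [lintegral_stepCount P hA hB]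
    have key : ∀ n s, ∑ i ∈ Finset.range n, P s (evt A B i s) ≤ r s := by
      intro n
      induction n with
      | zero => simp
      | succ n ih =>
        intro s
        by_cases hsB : s ∈ B
        · simp [evt_of_mem_B hsB]
        rw [Finset.sum_range_succ']
        simp_rw [measure_evt_succ F P hP hA hB hsB]
        rw [← lintegral_finsetSum _ fun i _ => measurable_evt P hA hB i]
        have hle := lintegral_mono (μ := F s) ih
        by_cases hsA : s ∈ A
        · rw [evt_zero_of_mem ⟨hsA, hsB⟩, measure_univ]
          exact (add_le_add_left hle 1).trans (h1 s ⟨hsA, hsB⟩)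
        · rw [evt_zero_of_notMem fun h => hsA h.1, measure_empty, add_zero]
          exact hle.trans (h2 s (by simp [hsA, hsB]))
    refine lt_of_le_of_lt ?_ (hfin s₀).lt_top
    rw [ENNReal.tsum_eq_iSup_nat]
    exact iSup_le fun n => key n s₀
  · intro H
    have key : ∀ s ∉ B, ∑' i, P s (evt A B i s) =
        P s (evt A B 0 s) + nextTime F (fun s => ∑' i, P s (evt A B i s)) s := by
      intro s hs
      rw [tsum_eq_zero_add' ENNReal.summable, nextTime,
        lintegral_tsum fun i => (measurable_evt P hA hB i).aemeasurable]
      simp_rw [measure_evt_succ F P hP hA hB hs]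
    refine ⟨fun s => ∑' i, P s (evt A B i s),
      Measurable.ennreal_tsum fun i => measurable_evt P hA hB i, fun s => ?_, ?_, ?_⟩
    · beta_reduce
      rw [← lintegral_stepCount P hA hB]
      exact (H s).ne
    · intro s hs
      beta_reduce
      rw [key s hs.2, evt_zero_of_mem hs, measure_univ, add_comm]
    · intro s hs
      beta_reduce
      rw [key s fun h => hs (Or.inr h)]
      exact le_add_self
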